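/- Let H be a real Hilbert space, Ψ : H → ℝ ∪ {+∞} proper, lower-semicontinuous and convex, and Φ : H → ℝ convex and continuously differentiable with L-Lipschitz continuous gradient. Suppose x* ∈ argmin(Ψ + Φ), and let (x_k) be generated by the accelerated forward-backward algorithm with parameter α ≥ 3 and step size 0 < s < 1/L. Then the energy sequence E(k) = (2s/(α−1))(k+α−2)²(Θ(x_k) − Θ(x*)) + (α−1)‖z_k − x*‖² is nonincreasing in k, and lim_{k→∞} E(k) exists. -/

import Mathlib

open Filter RealInnerProductSpace

/-!
Strong convexity of the proximal objective, the descent lemma for `Φ` and the tangent inequality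
for `Φ` combine, for `s * K ≤ 1`, into
`Θ(x_{k+1}) + ‖u - x_{k+1}‖² / (2s) ≤ Θ(u) + ‖u - y_k‖² / (2s)` for every `u`.
With `t = k + α - 1`, take `u = (k / t) x_k + ((α - 1) / t) x*`: then `u - y_k` and `u - x_{k+1}`
are `-(α - 1) / t` times `z_k - x*` and `z_{k+1} - x*`. After convexity of `Θ` and multiplication by
`2 s t² / (α - 1)` this is `E(k + 1) ≤ E(k)` with `k t` in place of `(k + α - 2)²` in `E(k)`, and
`k t ≤ (k + α - 2)²` because `α ≥ 3`.
-/

open scoped NNReal Topology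

section NormedSpace

variable {E F : Type*} [NormedAddCommGroup E] [NormedSpace ℝ E]
  [NormedAddCommGroup F] [NormedSpace ℝ F]

lemma add_fderiv_sub_le_of_convexOn {S : Set E} {f : E → ℝ} {f' : StrongDual ℝ E} {x y : E}
    (hf : ConvexOn ℝ S f) (hf' : HasFDerivAt f f' x) (hx : x ∈ S) (hy : y ∈ S) :
    f x + f' (y - x) ≤ f y := by
  set ℓ : ℝ →ᵃ[ℝ] E := AffineMap.lineMap x y with hℓ
  have hderiv : HasDerivAt (f ∘ ℓ) (f' (y - x)) 0 :=
    HasFDerivAt.comp_hasDerivAt 0 (f := ℓ) (by simpa [hℓ] using hf') AffineMap.hasDerivAt_lineMap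
  have hslope := (hf.comp_affineMap ℓ).le_slope_of_hasDerivAt (by simpa [hℓ] using hx)
    (by simpa [hℓ] using hy) one_pos hderiv
  simp only [hℓ, slope_def_field, Function.comp_apply, AffineMap.lineMap_apply_one,
    AffineMap.lineMap_apply_zero, sub_zero, div_one] at hslope
  linarith

lemma norm_sub_sub_fderiv_le_of_lipschitzWith {f : E → F} {f' : E → E →L[ℝ] F} {K : ℝ≥0}
    (hf : ∀ x, HasFDerivAt f (f' x) x) (hK : LipschitzWith K f') (x y : E) :
    ‖f y - f x - f' x (y - x)‖ ≤ K / 2 * ‖y - x‖ ^ 2 := by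
  set ℓ : ℝ →ᵃ[ℝ] E := AffineMap.lineMap x y with hℓ
  have hremainder (t : ℝ) : HasDerivAt (fun t ↦ f (ℓ t) - f x - t • f' x (y - x))
      ((f' (ℓ t) - f' x) (y - x)) t := by
    refine ((((hf (ℓ t)).comp_hasDerivAt t AffineMap.hasDerivAt_lineMap).sub_const (f x)).sub
      ((hasDerivAt_id t).smul_const (f' x (y - x)))).congr_deriv ?_
    rw [one_smul, sub_apply]
  have hbound (t : ℝ) : HasDerivAt (fun t ↦ K / 2 * ‖y - x‖ ^ 2 * t ^ 2)
      (K * ‖y - x‖ ^ 2 * t) t := by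
    refine (((hasDerivAt_id t).pow 2).const_mul (K / 2 * ‖y - x‖ ^ 2)).congr_deriv ?_
    simp only [id_eq, Nat.cast_ofNat, Nat.add_one_sub_one, pow_one, mul_one]
    ring
  have hderiv_le (t : ℝ) (ht : 0 ≤ t) :
      ‖(f' (ℓ t) - f' x) (y - x)‖ ≤ K * ‖y - x‖ ^ 2 * t :=
    calc ‖(f' (ℓ t) - f' x) (y - x)‖
        ≤ ‖f' (ℓ t) - f' x‖ * ‖y - x‖ := ContinuousLinearMap.le_opNorm _ _
      _ ≤ K * ‖ℓ t - x‖ * ‖y - x‖ := by gcongr; exact hK.norm_sub_le _ _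
      _ = K * ‖y - x‖ ^ 2 * t := by
        rw [hℓ, AffineMap.lineMap_apply_module', add_sub_cancel_right, norm_smul,
          Real.norm_of_nonneg ht]
        ring
  have := image_norm_le_of_norm_deriv_right_le_deriv_boundary (a := 0) (b := 1)
    (fun t _ ↦ (hremainder t).continuousAt.continuousWithinAt)
    (fun t _ ↦ (hremainder t).hasDerivWithinAt) (by simp [hℓ]) hbound
    (fun t ht ↦ hderiv_le t ht.1) (Set.right_mem_Icc.2 zero_le_one)
  simpa [hℓ] using this

lemma add_modulus_le_of_uniformConvexOn_of_isMinOn {S : Set E} {φ : ℝ → ℝ} {f : E → ℝ} {p u : E}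
    (hf : UniformConvexOn S φ f) (hmin : IsMinOn f S p) (hp : p ∈ S) (hu : u ∈ S) :
    f p + φ ‖p - u‖ ≤ f u := by
  have hsegment (t : ℝ) (ht : t ∈ Set.Ioo (0 : ℝ) 1) : f p + (1 - t) * φ ‖p - u‖ ≤ f u := by
    have h0 : 0 ≤ 1 - t := sub_nonneg.2 ht.2.le
    have hmem : (1 - t) • p + t • u ∈ S := hf.1 hp hu h0 ht.1.le (sub_add_cancel 1 t)
    have hconv := (hmin hmem).trans (hf.2 hp hu h0 ht.1.le (sub_add_cancel 1 t))
    simp only [smul_eq_mul] at hconv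
    refine le_of_mul_le_mul_left ?_ ht.1
    linarith
  have hlim : Tendsto (fun t : ℝ ↦ f p + (1 - t) * φ ‖p - u‖) (𝓝[>] 0) (𝓝 (f p + φ ‖p - u‖)) :=
    tendsto_nhdsWithin_of_tendsto_nhds (Continuous.tendsto' (by fun_prop) _ _ (by simp))
  exact le_of_tendsto hlim (eventually_of_mem (Ioo_mem_nhdsGT one_pos) hsegment)

end NormedSpace

section ForwardBackward

variable {H : Type*} [NormedAddCommGroup H] [InnerProductSpace ℝ H]

lemma strongConvexOn_add_mul_sq_norm_sub {S : Set H} {ψ : H → ℝ} (hψ : ConvexOn ℝ S ψ)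
    (c : ℝ) (v : H) : StrongConvexOn S (2 * c) (fun u ↦ ψ u + c * ‖u - v‖ ^ 2) := by
  have haffine : ConvexOn ℝ S (fun u ↦ (innerSL ℝ (-(2 * c) • v)) u + c * ‖v‖ ^ 2) :=
    ((innerSL ℝ (-(2 * c) • v)).toLinearMap.convexOn hψ.1).add_const _
  refine strongConvexOn_iff_convex.2 ((hψ.add haffine).congr fun u _ ↦ ?_)
  rw [Pi.add_apply, innerSL_apply_apply, real_inner_smul_left, norm_sub_sq_real, real_inner_comm]
  ring

lemma add_mul_sq_norm_sub_le_of_isMinOn {S : Set H} {ψ : H → ℝ} {c : ℝ} {v p u : H}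
    (hψ : ConvexOn ℝ S ψ) (hmin : IsMinOn (fun u ↦ ψ u + c * ‖u - v‖ ^ 2) S p)
    (hp : p ∈ S) (hu : u ∈ S) :
    ψ p + c * ‖p - v‖ ^ 2 + c * ‖u - p‖ ^ 2 ≤ ψ u + c * ‖u - v‖ ^ 2 := by
  simpa [norm_sub_rev p u] using add_modulus_le_of_uniformConvexOn_of_isMinOn
    (strongConvexOn_add_mul_sq_norm_sub hψ c v) hmin hp hu

lemma forwardBackward_add_sq_norm_sub_le {S : Set H} {ψ Φ : H → ℝ} {Φ' : H → H} {K : ℝ≥0} {s : ℝ}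
    {y p u : H} (hψ : ConvexOn ℝ S ψ) (hΦ : ConvexOn ℝ Set.univ Φ)
    (hΦ' : ∀ u, HasFDerivAt Φ (innerSL ℝ (Φ' u)) u) (hK : LipschitzWith K Φ')
    (hs : 0 < s) (hsK : s * K ≤ 1)
    (hmin : IsMinOn (fun u ↦ ψ u + 1 / (2 * s) * ‖u - (y - s • Φ' y)‖ ^ 2) S p)
    (hp : p ∈ S) (hu : u ∈ S) :
    ψ p + Φ p + 1 / (2 * s) * ‖u - p‖ ^ 2 ≤ ψ u + Φ u + 1 / (2 * s) * ‖u - y‖ ^ 2 := by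
  have hprox := add_mul_sq_norm_sub_le_of_isMinOn hψ hmin hp hu
  have hexpand (w : H) : 1 / (2 * s) * ‖w - (y - s • Φ' y)‖ ^ 2
      = 1 / (2 * s) * ‖w - y‖ ^ 2 + ⟪Φ' y, w - y⟫ + s / 2 * ‖Φ' y‖ ^ 2 := by
    rw [← sub_add, norm_add_sq_real, norm_smul, real_inner_smul_right, real_inner_comm, mul_pow,
      Real.norm_eq_abs, sq_abs]
    field_simp
  have hLip : LipschitzWith K (fun u ↦ innerSL ℝ (Φ' u)) :=
    one_mul K ▸ (InnerProductSpace.toDualMap ℝ H).lipschitz.comp hK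
  have hdescent : Φ p - Φ y - ⟪Φ' y, p - y⟫ ≤ K / 2 * ‖p - y‖ ^ 2 :=
    (Real.le_norm_self _).trans (norm_sub_sub_fderiv_le_of_lipschitzWith hΦ' hLip y p)
  have htangent : Φ y + ⟪Φ' y, u - y⟫ ≤ Φ u :=
    add_fderiv_sub_le_of_convexOn hΦ (hΦ' y) (Set.mem_univ y) (Set.mem_univ u)
  have hstep : K / 2 * ‖p - y‖ ^ 2 ≤ 1 / (2 * s) * ‖p - y‖ ^ 2 := by
    refine mul_le_mul_of_nonneg_right ?_ (sq_nonneg _)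
    rw [div_le_div_iff₀ two_pos (by positivity)]
    linarith
  rw [hexpand, hexpand] at hprox
  linarith

end ForwardBackward

section FistaPoints

variable {E : Type*} [AddCommGroup E] [Module ℝ E]

/-- The extrapolated point `y_k` of the accelerated forward-backward algorithm. Truncated
subtraction makes `x_{-1} = x_0`, so that `y_0 = x_0`. -/
noncomputable def fistaExtrapolation (α : ℝ) (x : ℕ → E) (k : ℕ) : E :=
  x k + (((k : ℝ) - 1) / ((k : ℝ) + α - 1)) • (x k - x (k - 1))

/-- The point `z_k` whose distance to the minimizer enters the energy. -/
noncomputable def fistaAnchor (α : ℝ) (x : ℕ → E) (k : ℕ) : E :=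
  x k + (((k : ℝ) - 1) / (α - 1)) • (x k - x (k - 1))

/-- The convex combination of `x_k` and `x*` at which the forward-backward inequality is tested. -/
noncomputable def fistaComparison (α : ℝ) (x : ℕ → E) (xstar : E) (k : ℕ) : E :=
  ((k : ℝ) / ((k : ℝ) + α - 1)) • x k + ((α - 1) / ((k : ℝ) + α - 1)) • xstar

lemma fistaComparison_sub_fistaExtrapolation {α : ℝ} (hα : 1 < α) (x : ℕ → E) (xstar : E) (k : ℕ) :
    fistaComparison α x xstar k - fistaExtrapolation α x k
      = -(((α - 1) / ((k : ℝ) + α - 1)) • (fistaAnchor α x k - xstar)) := by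
  have hα' : α - 1 ≠ 0 := (sub_pos.2 hα).ne'
  have ht : (k : ℝ) + α - 1 ≠ 0 := by linarith [k.cast_nonneg (α := ℝ)]
  unfold fistaComparison fistaExtrapolation fistaAnchor
  match_scalars
  · field_simp
    ring
  · field_simp
  · field_simp

lemma fistaComparison_sub_succ {α : ℝ} (hα : 1 < α) (x : ℕ → E) (xstar : E) (k : ℕ) :
    fistaComparison α x xstar k - x (k + 1)
      = -(((α - 1) / ((k : ℝ) + α - 1)) • (fistaAnchor α x (k + 1) - xstar)) := by
  have hα' : α - 1 ≠ 0 := (sub_pos.2 hα).ne'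
  have ht : (k : ℝ) + α - 1 ≠ 0 := by linarith [k.cast_nonneg (α := ℝ)]
  unfold fistaComparison fistaAnchor
  rw [Nat.add_sub_cancel]
  match_scalars
  · field_simp
    ring
  · field_simp
  · field_simp
    ring

end FistaPoints

section FistaEnergy

variable {E : Type*} [NormedAddCommGroup E] [NormedSpace ℝ E]

/-- The energy `E(k)` of a real-valued objective `θ`. -/
noncomputable def fistaEnergy (θ : E → ℝ) (s α : ℝ) (x : ℕ → E) (xstar : E) (k : ℕ) : ℝ :=
  2 * s / (α - 1) * ((k : ℝ) + α - 2) ^ 2 * (θ (x k) - θ xstar)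
    + (α - 1) * ‖fistaAnchor α x k - xstar‖ ^ 2

lemma fistaEnergy_nonneg {θ : E → ℝ} {s α : ℝ} {x : ℕ → E} {xstar : E} {k : ℕ} (hs : 0 ≤ s)
    (hα : 1 ≤ α) (hmin : θ xstar ≤ θ (x k)) : 0 ≤ fistaEnergy θ s α x xstar k := by
  have hα' : 0 ≤ α - 1 := sub_nonneg.2 hα
  have hgap : 0 ≤ θ (x k) - θ xstar := sub_nonneg.2 hmin
  unfold fistaEnergy
  positivity

lemma fista_add_sq_norm_le {S : Set E} {θ : E → ℝ} {s α : ℝ} {x : ℕ → E} {xstar : E} {k : ℕ}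
    (hθ : ConvexOn ℝ S θ) (hα : 1 < α) (hxk : x k ∈ S) (hxstar : xstar ∈ S)
    (hstep : ∀ u ∈ S, θ (x (k + 1)) + 1 / (2 * s) * ‖u - x (k + 1)‖ ^ 2
      ≤ θ u + 1 / (2 * s) * ‖u - fistaExtrapolation α x k‖ ^ 2) :
    θ (x (k + 1)) + 1 / (2 * s)
        * (((α - 1) / (k + α - 1)) ^ 2 * ‖fistaAnchor α x (k + 1) - xstar‖ ^ 2)
      ≤ k / (k + α - 1) * θ (x k) + (α - 1) / (k + α - 1) * θ xstar + 1 / (2 * s)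
        * (((α - 1) / (k + α - 1)) ^ 2 * ‖fistaAnchor α x k - xstar‖ ^ 2) := by
  have hk : (0 : ℝ) ≤ k := k.cast_nonneg
  have hα' : 0 < α - 1 := sub_pos.2 hα
  have ht : 0 < (k : ℝ) + α - 1 := by linarith
  have hweights : (k : ℝ) / (k + α - 1) + (α - 1) / (k + α - 1) = 1 := by
    rw [← add_div, div_eq_one_iff_eq ht.ne', add_sub_assoc]
  have hu : fistaComparison α x xstar k ∈ S :=
    hθ.1 hxk hxstar (by positivity) (by positivity) hweights
  have hθu : θ (fistaComparison α x xstar k)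
      ≤ k / (k + α - 1) * θ (x k) + (α - 1) / (k + α - 1) * θ xstar :=
    hθ.2 hxk hxstar (by positivity) (by positivity) hweights
  have hcomparison := hstep _ hu
  rw [fistaComparison_sub_succ hα, fistaComparison_sub_fistaExtrapolation hα, norm_neg, norm_neg,
    norm_smul, norm_smul, mul_pow, mul_pow, Real.norm_eq_abs, sq_abs] at hcomparison
  exact hcomparison.trans (add_le_add_left hθu _)

lemma mul_add_sub_one_le_sq {κ α : ℝ} (hκ : 0 ≤ κ) (hα : 3 ≤ α) :
    κ * (κ + α - 1) ≤ (κ + α - 2) ^ 2 := by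
  nlinarith [mul_nonneg hκ (sub_nonneg.2 hα), sq_nonneg (α - 2)]

lemma fistaEnergy_succ_le {S : Set E} {θ : E → ℝ} {s α : ℝ} {x : ℕ → E} {xstar : E} {k : ℕ}
    (hθ : ConvexOn ℝ S θ) (hs : 0 < s) (hα : 3 ≤ α) (hxk : x k ∈ S) (hxstar : xstar ∈ S)
    (hmin : θ xstar ≤ θ (x k))
    (hstep : ∀ u ∈ S, θ (x (k + 1)) + 1 / (2 * s) * ‖u - x (k + 1)‖ ^ 2
      ≤ θ u + 1 / (2 * s) * ‖u - fistaExtrapolation α x k‖ ^ 2) :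
    fistaEnergy θ s α x xstar (k + 1) ≤ fistaEnergy θ s α x xstar k := by
  have hk : (0 : ℝ) ≤ k := k.cast_nonneg
  have hα' : 0 < α - 1 := by linarith
  have hcontract := fista_add_sq_norm_le hθ (by linarith) hxk hxstar hstep
  set t : ℝ := k + α - 1 with ht
  have ht0 : 0 < t := by linarith
  have hscaled : 2 * s / (α - 1) * t ^ 2 * (θ (x (k + 1)) - θ xstar)
        + (α - 1) * ‖fistaAnchor α x (k + 1) - xstar‖ ^ 2
      ≤ 2 * s / (α - 1) * (k * t) * (θ (x k) - θ xstar)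
        + (α - 1) * ‖fistaAnchor α x k - xstar‖ ^ 2 := by
    have hmul := mul_le_mul_of_nonneg_left hcontract
      (by positivity : 0 ≤ 2 * s / (α - 1) * t ^ 2)
    have hk_eq : (k : ℝ) = t - (α - 1) := by rw [ht]; ring
    rw [← sub_nonneg] at hmul ⊢
    refine hmul.trans_eq ?_
    rw [hk_eq]
    field_simp
    ring
  have hgap : 0 ≤ θ (x k) - θ xstar := sub_nonneg.2 hmin
  have hcoeff : k * t ≤ ((k : ℝ) + α - 2) ^ 2 := mul_add_sub_one_le_sq hk hα
  have hsucc : ((k + 1 : ℕ) : ℝ) + α - 2 = t := by push_cast; ring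
  unfold fistaEnergy
  rw [hsucc]
  refine hscaled.trans (add_le_add_left ?_ _)
  gcongr

end FistaEnergy

section EffectiveDomain

/-- The effective domain of a function with values in `ℝ ∪ {+∞}`. -/
def effectiveDomain {X : Type*} (Ψ : X → EReal) : Set X := {u | Ψ u ≠ ⊤}

lemma coe_toReal_of_mem_effectiveDomain {X : Type*} {Ψ : X → EReal} (hbot : ∀ u, Ψ u ≠ ⊥) {u : X}
    (hu : u ∈ effectiveDomain Ψ) : ((Ψ u).toReal : EReal) = Ψ u :=
  EReal.coe_toReal hu (hbot u)

lemma convexOn_toReal_effectiveDomain {E : Type*} [AddCommGroup E] [Module ℝ E] {Ψ : E → EReal}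
    (hbot : ∀ u, Ψ u ≠ ⊥)
    (hconv : ∀ u v : E, ∀ a b : ℝ, 0 ≤ a → 0 ≤ b → a + b = 1 →
      Ψ (a • u + b • v) ≤ (a : EReal) * Ψ u + (b : EReal) * Ψ v) :
    ConvexOn ℝ (effectiveDomain Ψ) (fun u ↦ (Ψ u).toReal) := by
  have hle {u v : E} (hu : u ∈ effectiveDomain Ψ) (hv : v ∈ effectiveDomain Ψ) {a b : ℝ}
      (ha : 0 ≤ a) (hb : 0 ≤ b) (hab : a + b = 1) :
      Ψ (a • u + b • v) ≤ ((a * (Ψ u).toReal + b * (Ψ v).toReal : ℝ) : EReal) := by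
    push_cast
    rw [coe_toReal_of_mem_effectiveDomain hbot hu, coe_toReal_of_mem_effectiveDomain hbot hv]
    exact hconv u v a b ha hb hab
  refine ⟨fun u hu v hv a b ha hb hab ↦ ne_top_of_le_ne_top (EReal.coe_ne_top _)
    (hle hu hv ha hb hab), fun u hu v hv a b ha hb hab ↦ ?_⟩
  exact EReal.toReal_le_toReal (hle hu hv ha hb hab) (hbot _) (EReal.coe_ne_top _)

lemma mem_effectiveDomain_of_forall_add_le {X : Type*} {Ψ : X → EReal} {g : X → ℝ} {p : X}
    (hproper : ∃ u, Ψ u ≠ ⊤) (hp : ∀ u, Ψ p + (g p : EReal) ≤ Ψ u + (g u : EReal)) :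
    p ∈ effectiveDomain Ψ := by
  obtain ⟨u, hu⟩ := hproper
  intro htop
  have hle := hp u
  rw [htop, EReal.top_add_coe, top_le_iff] at hle
  exact EReal.add_ne_top hu (EReal.coe_ne_top _) hle

lemma isMinOn_toReal_add_of_forall_add_le {X : Type*} {Ψ : X → EReal} {g : X → ℝ} {p : X}
    (hbot : ∀ u, Ψ u ≠ ⊥) (hpmem : p ∈ effectiveDomain Ψ)
    (hp : ∀ u, Ψ p + (g p : EReal) ≤ Ψ u + (g u : EReal)) :
    IsMinOn (fun u ↦ (Ψ u).toReal + g u) (effectiveDomain Ψ) p := by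
  intro u hu
  have hle := hp u
  rw [← coe_toReal_of_mem_effectiveDomain hbot hpmem,
    ← coe_toReal_of_mem_effectiveDomain hbot hu] at hle
  exact_mod_cast hle

end EffectiveDomain

section ProxPoint

variable {E : Type*} [NormedAddCommGroup E]

/-- `p` is the proximal point of `s • Ψ` at `v`, specified by its minimality. -/
def IsProxPoint (Ψ : E → EReal) (s : ℝ) (v p : E) : Prop :=
  ∀ u : E, Ψ p + ((1 / (2 * s) * ‖p - v‖ ^ 2 : ℝ) : EReal)
    ≤ Ψ u + ((1 / (2 * s) * ‖u - v‖ ^ 2 : ℝ) : EReal)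

lemma IsProxPoint.mem_effectiveDomain {Ψ : E → EReal} {s : ℝ} {v p : E}
    (hp : IsProxPoint Ψ s v p) (hproper : ∃ u, Ψ u ≠ ⊤) : p ∈ effectiveDomain Ψ :=
  mem_effectiveDomain_of_forall_add_le (g := fun u ↦ 1 / (2 * s) * ‖u - v‖ ^ 2) hproper hp

lemma IsProxPoint.isMinOn_toReal {Ψ : E → EReal} {s : ℝ} {v p : E} (hp : IsProxPoint Ψ s v p)
    (hbot : ∀ u, Ψ u ≠ ⊥) (hproper : ∃ u, Ψ u ≠ ⊤) :
    IsMinOn (fun u ↦ (Ψ u).toReal + 1 / (2 * s) * ‖u - v‖ ^ 2) (effectiveDomain Ψ) p :=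
  isMinOn_toReal_add_of_forall_add_le hbot (hp.mem_effectiveDomain hproper) hp

end ProxPoint

section ExtFistaEnergy

variable {E : Type*} [NormedAddCommGroup E] [NormedSpace ℝ E]

/-- `x` is generated by the accelerated forward-backward algorithm for `Ψ + Φ`, where `Φ'` is the
gradient of `Φ`. -/
def IsFistaSequence (Ψ : E → EReal) (Φ' : E → E) (s α : ℝ) (x : ℕ → E) : Prop :=
  ∀ k : ℕ, IsProxPoint Ψ s
    (fistaExtrapolation α x k - s • Φ' (fistaExtrapolation α x k)) (x (k + 1))

/-- The energy `E(k)` of an extended-real-valued objective `Θ`. -/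
noncomputable def extFistaEnergy (Θ : E → EReal) (s α : ℝ) (x : ℕ → E) (xstar : E) (k : ℕ) :
    EReal :=
  ((2 * s / (α - 1) * ((k : ℝ) + α - 2) ^ 2 : ℝ) : EReal) * (Θ (x k) - Θ xstar)
    + (((α - 1) * ‖fistaAnchor α x k - xstar‖ ^ 2 : ℝ) : EReal)

lemma extFistaEnergy_eq_coe {Θ : E → EReal} {θ : E → ℝ} {s α : ℝ} {x : ℕ → E} {xstar : E} {k : ℕ}
    (hxk : Θ (x k) = θ (x k)) (hxstar : Θ xstar = θ xstar) :
    extFistaEnergy Θ s α x xstar k = fistaEnergy θ s α x xstar k := by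
  rw [extFistaEnergy, fistaEnergy, hxk, hxstar]
  norm_cast

lemma extFistaEnergy_eq_top {Θ : E → EReal} {s α : ℝ} {x : ℕ → E} {xstar : E} {k : ℕ}
    (hs : 0 < s) (hα : 2 < α) (hxk : Θ (x k) = ⊤) (hxstar : Θ xstar ≠ ⊤) :
    extFistaEnergy Θ s α x xstar k = ⊤ := by
  have hcoeff : 0 < 2 * s / (α - 1) * ((k : ℝ) + α - 2) ^ 2 := by
    have hα' : 0 < α - 1 := by linarith
    have hbase : 0 < (k : ℝ) + α - 2 := by linarith [k.cast_nonneg (α := ℝ)]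
    positivity
  rw [extFistaEnergy, hxk, EReal.top_sub hxstar, EReal.coe_mul_top_of_pos hcoeff,
    EReal.top_add_coe]

end ExtFistaEnergy

lemma exists_tendsto_coe_of_antitone_of_succ_eq_coe {E : ℕ → EReal} {e : ℕ → ℝ} (hE : Antitone E)
    (he : ∀ k, E (k + 1) = e k) (hbdd : BddBelow (Set.range e)) :
    ∃ l : ℝ, Tendsto E atTop (𝓝 l) := by
  have hanti : Antitone e := fun i j hij ↦ by
    have := hE (Nat.succ_le_succ hij)
    rw [he, he] at this
    exact_mod_cast this
  refine ⟨⨅ k, e k, (tendsto_add_atTop_iff_nat 1).1 ?_⟩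
  simp only [he, EReal.tendsto_coe]
  exact tendsto_atTop_ciInf hanti hbdd

theorem fista_energy_nonincreasing_general
    {H : Type*} [NormedAddCommGroup H] [InnerProductSpace ℝ H]
    {Ψ : H → EReal} {Φ : H → ℝ} {Φ' : H → H} {K : ℝ≥0} {s α : ℝ} {x : ℕ → H} {xstar : H}
    (hΨ_ne_bot : ∀ u, Ψ u ≠ ⊥) (hΨ_proper : ∃ u, Ψ u ≠ ⊤)
    (hΨ_convex : ∀ u v : H, ∀ a b : ℝ, 0 ≤ a → 0 ≤ b → a + b = 1 →
      Ψ (a • u + b • v) ≤ (a : EReal) * Ψ u + (b : EReal) * Ψ v)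
    (hΦ_convex : ConvexOn ℝ Set.univ Φ)
    (hΦ_diff : ∀ u, HasFDerivAt Φ (innerSL ℝ (Φ' u)) u)
    (hΦ_lip : LipschitzWith K Φ')
    (hα : 3 ≤ α) (hs : 0 < s) (hsK : s * K ≤ 1)
    (hx : IsFistaSequence Ψ Φ' s α x)
    (hxstar : ∀ u, Ψ xstar + (Φ xstar : EReal) ≤ Ψ u + (Φ u : EReal)) :
    Antitone (extFistaEnergy (fun u ↦ Ψ u + (Φ u : EReal)) s α x xstar) ∧
      ∃ l : ℝ, Tendsto (extFistaEnergy (fun u ↦ Ψ u + (Φ u : EReal)) s α x xstar) atTop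
        (𝓝 l) := by
  set Θ : H → EReal := fun u ↦ Ψ u + (Φ u : EReal)
  set θ : H → ℝ := fun u ↦ (Ψ u).toReal + Φ u
  have hψ := convexOn_toReal_effectiveDomain hΨ_ne_bot hΨ_convex
  have hθ : ConvexOn ℝ (effectiveDomain Ψ) θ :=
    hψ.add (hΦ_convex.subset (Set.subset_univ _) hψ.1)
  have hΘ_coe {u : H} (hu : u ∈ effectiveDomain Ψ) : Θ u = θ u := by
    simp only [Θ, θ, EReal.coe_add, coe_toReal_of_mem_effectiveDomain hΨ_ne_bot hu]
  have hxstar_mem := mem_effectiveDomain_of_forall_add_le hΨ_proper hxstar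
  have hxstar_min := isMinOn_toReal_add_of_forall_add_le hΨ_ne_bot hxstar_mem hxstar
  have hx_mem (k : ℕ) : x (k + 1) ∈ effectiveDomain Ψ := (hx k).mem_effectiveDomain hΨ_proper
  have hcoe {k : ℕ} (hk : x k ∈ effectiveDomain Ψ) :
      extFistaEnergy Θ s α x xstar k = fistaEnergy θ s α x xstar k :=
    extFistaEnergy_eq_coe (hΘ_coe hk) (hΘ_coe hxstar_mem)
  have hanti : Antitone (extFistaEnergy Θ s α x xstar) := by
    refine antitone_nat_of_succ_le fun k ↦ ?_
    by_cases hk : x k ∈ effectiveDomain Ψ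
    · rw [hcoe hk, hcoe (hx_mem k), EReal.coe_le_coe_iff]
      exact fistaEnergy_succ_le hθ hs hα hk hxstar_mem (hxstar_min hk) fun u hu ↦
        forwardBackward_add_sq_norm_sub_le hψ hΦ_convex hΦ_diff hΦ_lip hs hsK
          ((hx k).isMinOn_toReal hΨ_ne_bot hΨ_proper) (hx_mem k) hu
    -- Possible only for `k = 0`: all later iterates are proximal points.
    · have hΘ_top : Θ (x k) = ⊤ := by simp only [Θ, not_not.1 hk, EReal.top_add_coe]
      rw [extFistaEnergy_eq_top hs (by linarith) hΘ_top
        (hΘ_coe hxstar_mem ▸ EReal.coe_ne_top _)]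
      exact le_top
  have hbdd : BddBelow (Set.range fun k ↦ fistaEnergy θ s α x xstar (k + 1)) :=
    ⟨0, Set.forall_mem_range.2 fun k ↦
      fistaEnergy_nonneg hs.le (by linarith) (hxstar_min (hx_mem k))⟩
  exact ⟨hanti, exists_tendsto_coe_of_antitone_of_succ_eq_coe hanti (fun k ↦ hcoe (hx_mem k)) hbdd⟩

/-- Fact 1: the energy sequence `E(k)` is nonincreasing and its limit exists. -/
theorem fista_energy_nonincreasing
    {H : Type*} [NormedAddCommGroup H] [InnerProductSpace ℝ H] [CompleteSpace H]
    (Ψ : H → EReal) (Φ : H → ℝ) (Φ' : H → H) (L s α : ℝ)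
    (hΨ_ne_bot : ∀ u, Ψ u ≠ ⊥) (hΨ_proper : ∃ u, Ψ u ≠ ⊤)
    (hΨ_lsc : LowerSemicontinuous Ψ)
    (hΨ_convex : ∀ u v : H, ∀ a b : ℝ, 0 ≤ a → 0 ≤ b → a + b = 1 →
      Ψ (a • u + b • v) ≤ (a : EReal) * Ψ u + (b : EReal) * Ψ v)
    (hΦ_convex : ConvexOn ℝ Set.univ Φ)
    (hΦ_diff : ∀ u, HasGradientAt Φ (Φ' u) u)
    (hΦ_lip : LipschitzWith (Real.toNNReal L) Φ')
    (hα : 3 ≤ α) (hs : 0 < s) (hsL : s < 1 / L)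
    (x y : ℕ → H)
    (hy : ∀ k : ℕ,
      y k = x k + (((k : ℝ) - 1) / ((k : ℝ) + α - 1)) • (x k - x (k - 1)))
    (hx : ∀ k : ℕ, ∀ u : H,
      Ψ (x (k + 1)) + ((1 / (2 * s) * ‖x (k + 1) - (y k - s • Φ' (y k))‖ ^ 2 : ℝ) : EReal)
        ≤ Ψ u + ((1 / (2 * s) * ‖u - (y k - s • Φ' (y k))‖ ^ 2 : ℝ) : EReal))
    (xstar : H)
    (hxstar : ∀ u, Ψ xstar + (Φ xstar : EReal) ≤ Ψ u + (Φ u : EReal)) :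
    Antitone (fun k : ℕ => (((2 * s / (α - 1) * ((k : ℝ) + α - 2) ^ 2 : ℝ) : EReal) * ((Ψ (x k) + (Φ (x k) : EReal)) - (Ψ xstar + (Φ xstar : EReal))) + (((α - 1) * ‖(x k + (((k : ℝ) - 1) / (α - 1)) • (x k - x (k - 1))) - xstar‖ ^ 2 : ℝ) : EReal))) ∧
      ∃ l : EReal, Tendsto (fun k : ℕ => (((2 * s / (α - 1) * ((k : ℝ) + α - 2) ^ 2 : ℝ) : EReal) * ((Ψ (x k) + (Φ (x k) : EReal)) - (Ψ xstar + (Φ xstar : EReal))) + (((α - 1) * ‖(x k + (((k : ℝ) - 1) / (α - 1)) • (x k - x (k - 1))) - xstar‖ ^ 2 : ℝ) : EReal))) atTop (nhds l) := by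
  have hL : 0 < L := one_div_pos.1 (hs.trans hsL)
  have hsK : s * Real.toNNReal L ≤ 1 := by
    rw [Real.coe_toNNReal _ hL.le]
    exact ((lt_div_iff₀ hL).1 hsL).le
  obtain rfl : y = fistaExtrapolation α x := funext hy
  obtain ⟨hanti, l, hl⟩ := fista_energy_nonincreasing_general hΨ_ne_bot hΨ_proper hΨ_convex
    hΦ_convex hΦ_diff hΦ_lip hα hs hsK hx hxstar
  exact ⟨hanti, l, hl⟩
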